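/- arXiv:2102.00412 — 3 statements merged into one kernel-verified Lean document; each statement's English description precedes it below -/
import Mathlib

section
/- Let n be a positive integer and let p and q be primes. Then 𝒜(p^n, q^n) = C(2n, n). -/
/-!
A pair `(S', S'')` with difference set `{1, …, ab}` has `min S' = 0`, and with `M = max S'` the sets
`A = M - S'` and `B = S'' - (M + 1)` satisfy `A ⊕ B = {0, …, ab - 1}` with every sum represented
exactly once (`Tile`); this correspondence is bijective (`gracefulCount_eq`).

So the task is to count the tilings `A ⊕ B = [0, p ^ m q ^ k)` with `|A| = p ^ m`, `|B| = q ^ k`.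
The number is `C(m + k, m)` by Pascal's rule. Exactly one of `A`, `B` contains `1`; suppose `A` does
and let `d` be the least positive element of `B`. De Bruijn's structure lemma (`Tile.blocks`) says
that `B` consists of multiples of `d` and that `A` is a union of blocks `[dt, dt + d)`. Hence
`d ∣ |A| = p ^ m`, so `p ∣ d`, and `(A, B) = (pA' + [0, p), pB')` for a unique tiling `(A', B')` of
`[0, p ^ (m - 1) q ^ k)`. The case `1 ∈ B` is symmetric.
-/

open Polynomial

/-- `𝒜(a,b)`: the number of pairs `(S', S'')` of finite sets of nonnegative integers with
`|S'| = a`, `|S''| = b`, both subsets of `{0, …, ab}`, and difference set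
`{y − x : x ∈ S', y ∈ S''} = {1, …, ab}`. -/
noncomputable def gracefulCount (a b : ℕ) : ℕ :=
  Set.ncard {p : Finset ℕ × Finset ℕ |
    p.1.card = a ∧ p.2.card = b ∧
    p.1 ⊆ Finset.range (a * b + 1) ∧ p.2 ⊆ Finset.range (a * b + 1) ∧
    Finset.image (fun q : ℕ × ℕ => (q.2 : ℤ) - (q.1 : ℤ)) (p.1 ×ˢ p.2) =
      Finset.Icc (1 : ℤ) ((a : ℤ) * b)}

/-! ### Tilings of an interval -/

/-- `A ⊕ B = {0, …, N - 1}`: every number below `N`, and no other, is a sum `a + b` with `a ∈ A`,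
`b ∈ B`, and such a representation is unique. -/
structure Tile (A B : Finset ℕ) (N : ℕ) : Prop where
  cover : ∀ x, x < N ↔ ∃ a ∈ A, ∃ b ∈ B, a + b = x
  uniq : ∀ a ∈ A, ∀ b ∈ B, ∀ a' ∈ A, ∀ b' ∈ B, a + b = a' + b' → a = a' ∧ b = b'

namespace Tile

variable {A B : Finset ℕ} {N : ℕ}

lemma swap (h : Tile A B N) : Tile B A N where
  cover x := by
    rw [h.cover]
    constructor
    · rintro ⟨a, ha, b, hb, e⟩
      exact ⟨b, hb, a, ha, by omega⟩
    · rintro ⟨a, ha, b, hb, e⟩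
      exact ⟨b, hb, a, ha, by omega⟩
  uniq a ha b hb a' ha' b' hb' e :=
    (h.uniq b hb a ha b' hb' a' ha' (by omega)).symm

lemma lt (h : Tile A B N) {a b : ℕ} (ha : a ∈ A) (hb : b ∈ B) : a + b < N :=
  (h.cover _).2 ⟨a, ha, b, hb, rfl⟩

lemma zero_left (h : Tile A B N) (hN : 0 < N) : 0 ∈ A := by
  obtain ⟨a, ha, b, hb, e⟩ := (h.cover 0).1 hN
  have : a = 0 := by omega
  exact this ▸ ha

lemma zero_right (h : Tile A B N) (hN : 0 < N) : 0 ∈ B := h.swap.zero_left hN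

lemma subset_left (h : Tile A B N) (hN : 0 < N) : A ⊆ Finset.range N := fun a ha => by
  have := h.lt ha (h.zero_right hN)
  simpa using this

/-- A positive number lying in `A` does not lie in `B`, since it would be both `x + 0`
and `0 + x`. -/
lemma not_mem_right (h : Tile A B N) (hN : 0 < N) {x : ℕ} (hx : 0 < x) (ha : x ∈ A) : x ∉ B := by
  intro hb
  have := h.uniq x ha 0 (h.zero_right hN) 0 (h.zero_left hN) x hb (by omega)
  omega

/-- De Bruijn's structure lemma, block by block: if `d` is the least positive element of `B`,
then the block `[dt, dt + d)` is contained in or disjoint from `A`, and meets `B` at most in `dt`. -/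
lemma blocks (h : Tile A B N) (hN : 0 < N) {d : ℕ} (hd : d ∈ B) (hd0 : 0 < d)
    (hmin : ∀ b ∈ B, 0 < b → d ≤ b) (t : ℕ) :
    (∀ i < d, (d * t + i ∈ A ↔ d * t ∈ A)) ∧ (∀ i < d, d * t + i ∈ B → i = 0) := by
  have zA := h.zero_left hN
  have zB := h.zero_right hN
  -- The initial block lies in `A`, as `B` has no positive element below `d`.
  have init : ∀ i < d, i ∈ A := by
    intro i hi
    have hdN := h.lt zA hd
    obtain ⟨a, ha, b, hb, e⟩ := (h.cover i).1 (by omega)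
    rcases Nat.eq_zero_or_pos b with h0 | h0
    · have : a = i := by omega
      exact this ▸ ha
    · have := hmin b hb h0
      omega
  induction t using Nat.strong_induction_on with
  | _ t ih =>
  rcases Nat.eq_zero_or_pos t with rfl | ht
  · refine ⟨fun i hi => ?_, fun i hi hb => ?_⟩
    · simp [init i hi, zA]
    · by_contra h0
      have := hmin _ hb (by omega)
      omega
  have hdt : d ≤ d * t := Nat.le_mul_of_pos_right d ht
  by_cases hc : ∃ r s, r < t ∧ s < t ∧ r + s = t ∧ d * r ∈ A ∧ d * s ∈ B
  · -- The block is already covered by sums of smaller elements.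
    obtain ⟨r, s, hr, hs, hrs, hrA, hsB⟩ := hc
    have e : d * r + d * s = d * t := by rw [← mul_add, hrs]
    have hr0 : d ≤ d * r := Nat.le_mul_of_pos_right d (by omega)
    have hs0 : d ≤ d * s := Nat.le_mul_of_pos_right d (by omega)
    have hnA : ∀ i < d, d * t + i ∉ A := fun i hi hA => by
      have := h.uniq _ hA 0 zB _ (((ih r hr).1 i hi).2 hrA) _ hsB (by omega)
      omega
    refine ⟨fun i hi => iff_of_false (hnA i hi) (by simpa using hnA 0 hd0), fun i hi hB => ?_⟩
    have := h.uniq 0 zA _ hB _ (((ih r hr).1 i hi).2 hrA) _ hsB (by omega)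
    omega
  · -- Otherwise each sum landing in the block has a summand in the block itself.
    have big : ∀ i < d, ∀ a ∈ A, ∀ b ∈ B, a + b = d * t + i → d * t ≤ a ∨ d * t ≤ b := by
      intro i hi a ha b hb e
      by_contra! hlt
      apply hc
      have ha' := Nat.div_add_mod a d
      have hb' := Nat.div_add_mod b d
      have har := Nat.mod_lt a hd0
      have hbr := Nat.mod_lt b hd0
      have hr : a / d < t := Nat.div_lt_of_lt_mul hlt.1
      have hs : b / d < t := Nat.div_lt_of_lt_mul hlt.2
      have hb0 : b % d = 0 := (ih _ hs).2 _ hbr (by rw [hb']; exact hb)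
      refine ⟨a / d, b / d, hr, hs, ?_, ((ih _ hr).1 _ har).1 (by rw [ha']; exact ha), ?_⟩
      · have e2 : d * (a / d + b / d) + a % d = d * t + i := by rw [mul_add]; omega
        have := congrArg (· / d) e2
        simpa [Nat.mul_add_div hd0, Nat.div_eq_of_lt har, Nat.div_eq_of_lt hi] using this
      · have : d * (b / d) = b := by omega
        rw [this]; exact hb
    by_cases htB : d * t ∈ B
    · have hnA : ∀ i < d, d * t + i ∉ A := fun i hi hA => by
        have := h.uniq _ hA 0 zB i (init i hi) _ htB (by omega)
        omega
      refine ⟨fun i hi => iff_of_false (hnA i hi) (by simpa using hnA 0 hd0), fun i hi hB => ?_⟩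
      have := h.uniq 0 zA _ hB i (init i hi) _ htB (by omega)
      omega
    by_cases htA : d * t ∈ A
    · -- An element `dt + j` of `B` would give `(dt) + d = (d - j) + (dt + j)`.
      have hnB : ∀ j < d, d * t + j ∉ B := fun j hj hB => by
        rcases Nat.eq_zero_or_pos j with rfl | hj0
        · exact htB (by simpa using hB)
        have := h.uniq _ htA d hd (d - j) (init _ (by omega)) _ hB (by omega)
        omega
      refine ⟨fun i hi => iff_of_true ?_ htA, fun i hi hB => (hnB i hi hB).elim⟩
      have hlt := h.lt htA hd
      obtain ⟨a, ha, b, hb, e⟩ := (h.cover (d * t + i)).1 (by omega)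
      rcases big i hi a ha b hb e with h1 | h1
      · rcases Nat.eq_zero_or_pos b with h0 | h0
        · have : a = d * t + i := by omega
          exact this ▸ ha
        · have := hmin b hb h0
          omega
      · refine (hnB (b - d * t) (by omega) ?_).elim
        have : d * t + (b - d * t) = b := by omega
        rw [this]; exact hb
    · -- `dt` is in neither set, so it is no sum at all and the block lies beyond `N`.
      have hge : N ≤ d * t := by
        by_contra! hlt
        obtain ⟨a, ha, b, hb, e⟩ := (h.cover (d * t)).1 hlt
        rcases big 0 hd0 a ha b hb e with h1 | h1
        · have : a = d * t := by omega
          exact htA (this ▸ ha)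
        · have : b = d * t := by omega
          exact htB (this ▸ hb)
      refine ⟨fun i hi => iff_of_false (fun hA => ?_) htA, fun i hi hB => ?_⟩
      · have := h.lt hA zB
        omega
      · have := h.lt zA hB
        omega

end Tile

/-! ### Dilating a tiling by a factor -/

/-- `cA + {0, …, c - 1}`: each point of `A` is replaced by a block of length `c`. -/
def blow (c : ℕ) (A : Finset ℕ) : Finset ℕ :=
  (A ×ˢ Finset.range c).image fun z => c * z.1 + z.2

/-- The dilate `cB`. -/
def scale (c : ℕ) (B : Finset ℕ) : Finset ℕ := B.image (c * ·)

lemma mem_blow {c : ℕ} (hc : 0 < c) {A : Finset ℕ} {x : ℕ} : x ∈ blow c A ↔ x / c ∈ A := by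
  simp only [blow, Finset.mem_image, Finset.mem_product, Finset.mem_range, Prod.exists]
  constructor
  · rintro ⟨a, i, ⟨ha, hi⟩, rfl⟩
    rwa [Nat.mul_add_div hc, Nat.div_eq_of_lt hi, add_zero]
  · intro h
    exact ⟨x / c, x % c, ⟨h, Nat.mod_lt _ hc⟩, Nat.div_add_mod x c⟩

lemma card_blow {c : ℕ} (hc : 0 < c) (A : Finset ℕ) : (blow c A).card = c * A.card := by
  rw [blow, Finset.card_image_of_injOn, Finset.card_product, Finset.card_range, mul_comm]
  rintro ⟨a, i⟩ h ⟨b, j⟩ h' e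
  simp only [Finset.coe_product, Set.mem_prod, Finset.mem_coe, Finset.mem_range] at h h' e
  have e1 := congrArg (· / c) e
  simp only [Nat.mul_add_div hc, Nat.div_eq_of_lt h.2, Nat.div_eq_of_lt h'.2, add_zero] at e1
  subst e1
  simpa using e

lemma scale_injective {c : ℕ} (hc : 0 < c) : Function.Injective (scale c) :=
  Finset.image_injective fun _ _ e => Nat.eq_of_mul_eq_mul_left hc e

lemma card_scale {c : ℕ} (hc : 0 < c) (B : Finset ℕ) : (scale c B).card = B.card :=
  Finset.card_image_of_injective _ fun _ _ e => Nat.eq_of_mul_eq_mul_left hc e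

lemma blow_injective {c : ℕ} (hc : 0 < c) : Function.Injective (blow c) := by
  intro A A' h
  ext x
  have := Finset.ext_iff.1 h (c * x)
  rwa [mem_blow hc, mem_blow hc, Nat.mul_div_cancel_left _ hc] at this

lemma tile_blow_scale {c : ℕ} (hc : 0 < c) {A B : Finset ℕ} {N : ℕ} :
    Tile (blow c A) (scale c B) (c * N) ↔ Tile A B N := by
  have mS : ∀ b ∈ B, c * b ∈ scale c B := fun b hb => Finset.mem_image_of_mem _ hb
  have mA : ∀ a, a ∈ A → c * a ∈ blow c A := fun a ha => by
    rwa [mem_blow hc, Nat.mul_div_cancel_left _ hc]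
  constructor
  · intro h
    refine ⟨fun x => ?_, fun a ha b hb a' ha' b' hb' e => ?_⟩
    · rw [← Nat.mul_lt_mul_left hc, h.cover]
      constructor
      · rintro ⟨a, ha, _, hb, e⟩
        obtain ⟨b, hbB, rfl⟩ := Finset.mem_image.1 hb
        refine ⟨a / c, (mem_blow hc).1 ha, b, hbB, ?_⟩
        have := congrArg (· / c) e
        simpa [Nat.add_mul_div_left _ _ hc, Nat.mul_div_cancel_left _ hc] using this
      · rintro ⟨a, ha, b, hb, rfl⟩
        exact ⟨c * a, mA a ha, c * b, mS b hb, by ring⟩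
    · have := h.uniq _ (mA a ha) _ (mS b hb) _ (mA a' ha') _ (mS b' hb')
        (by rw [← mul_add, ← mul_add, e])
      exact ⟨Nat.eq_of_mul_eq_mul_left hc this.1, Nat.eq_of_mul_eq_mul_left hc this.2⟩
  · intro h
    refine ⟨fun x => ?_, fun a ha b hb a' ha' b' hb' e => ?_⟩
    · rw [mul_comm, ← Nat.div_lt_iff_lt_mul hc, h.cover]
      constructor
      · rintro ⟨a, ha, b, hb, e⟩
        refine ⟨c * a + x % c, ?_, c * b, mS b hb, ?_⟩
        · rwa [mem_blow hc, Nat.mul_add_div hc, Nat.div_eq_of_lt (Nat.mod_lt _ hc), add_zero]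
        · have h1 := Nat.div_add_mod x c
          rw [← e, mul_add] at h1
          omega
      · rintro ⟨a, ha, _, hb, rfl⟩
        obtain ⟨b, hbB, rfl⟩ := Finset.mem_image.1 hb
        exact ⟨a / c, (mem_blow hc).1 ha, b, hbB, (Nat.add_mul_div_left _ _ hc).symm⟩
    · obtain ⟨b, hbB, rfl⟩ := Finset.mem_image.1 hb
      obtain ⟨b', hbB', rfl⟩ := Finset.mem_image.1 hb'
      have e1 := congrArg (· / c) e
      simp only [Nat.add_mul_div_left _ _ hc] at e1
      have := h.uniq _ ((mem_blow hc).1 ha) b hbB _ ((mem_blow hc).1 ha') b' hbB' e1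
      obtain ⟨-, rfl⟩ := this
      exact ⟨by simpa using e, rfl⟩

/-- If `1 ∈ A` and `|A|` is a power of the prime `p`, then the tiling is the `p`-fold dilation of
another pair: the block length `d` of `Tile.blocks` divides `|A|`, hence is a multiple of `p`. -/
lemma Tile.exists_dilate {A B : Finset ℕ} {N p m : ℕ} (h : Tile A B N) (hN : 0 < N) (hp : p.Prime)
    (hcard : A.card = p ^ m) (h1 : 1 ∈ A) :
    ∃ A' B', A = blow p A' ∧ B = scale p B' := by
  have hp0 := hp.pos
  have zA := h.zero_left hN
  have zB := h.zero_right hN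
  -- A block length `d`, taken to be `N` when `B = {0}`.
  obtain ⟨d, hd1, hdA, hdB⟩ : ∃ d, 1 < d ∧ (∀ x, x ∈ A ↔ d * (x / d) ∈ A) ∧ ∀ x ∈ B, d ∣ x := by
    by_cases hB : ∃ b, b ∈ B ∧ 0 < b
    · classical
      have hs := Nat.find_spec hB
      have hmin : ∀ b ∈ B, 0 < b → Nat.find hB ≤ b := fun b hb h0 => Nat.find_min' hB ⟨hb, h0⟩
      generalize Nat.find hB = d at hs hmin
      have key := h.blocks hN hs.1 hs.2 hmin
      have hne : d ≠ 1 := by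
        rintro rfl
        exact h.not_mem_right hN one_pos h1 hs.1
      refine ⟨d, by omega, fun x => ?_, fun x hx => ?_⟩
      · have := (key (x / d)).1 (x % d) (Nat.mod_lt _ hs.2)
        rwa [Nat.div_add_mod] at this
      · exact Nat.dvd_of_mod_eq_zero
          ((key (x / d)).2 (x % d) (Nat.mod_lt _ hs.2) (by rwa [Nat.div_add_mod]))
    · push Not at hB
      have hA : ∀ x, x ∈ A ↔ x < N := by
        intro x
        rw [h.cover]
        constructor
        · exact fun hx => ⟨x, hx, 0, zB, rfl⟩
        · rintro ⟨a, ha, b, hb, rfl⟩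
          have := hB b hb
          obtain rfl : b = 0 := by omega
          exact ha
      refine ⟨N, (hA 1).1 h1, fun x => ?_, fun x hx => ?_⟩
      · rw [hA, hA]
        constructor
        · intro hx
          simpa [Nat.div_eq_of_lt hx] using hN
        · intro hx
          have : x / N < 1 := by
            by_contra! hge
            have := Nat.mul_le_mul_left N hge
            omega
          exact (Nat.div_lt_one_iff hN).1 this
      · have := hB x hx
        obtain rfl : x = 0 := by omega
        exact dvd_zero _
  have hd0 : 0 < d := by omega
  -- `A` is the union of `d`-blocks, so `d` divides its cardinality.
  have hAd : A = blow d (A.image (· / d)) := by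
    ext x
    rw [mem_blow hd0, Finset.mem_image]
    constructor
    · exact fun hx => ⟨x, hx, rfl⟩
    · rintro ⟨y, hy, e⟩
      rw [hdA, ← e, ← hdA]
      exact hy
  have hdvd : d ∣ p ^ m := by
    rw [← hcard, hAd, card_blow hd0]
    exact dvd_mul_right _ _
  have hpd : p ∣ d := by
    obtain ⟨j, -, rfl⟩ := (Nat.dvd_prime_pow hp).1 hdvd
    refine dvd_pow_self p ?_
    rintro rfl
    simp at hd1
  obtain ⟨e, rfl⟩ := hpd
  refine ⟨A.image (· / p), B.image (· / p), ?_, ?_⟩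
  · ext x
    rw [mem_blow hp0, Finset.mem_image]
    constructor
    · exact fun hx => ⟨x, hx, rfl⟩
    · rintro ⟨y, hy, he⟩
      rw [hdA, ← Nat.div_div_eq_div_mul, ← he, Nat.div_div_eq_div_mul, ← hdA]
      exact hy
  · ext x
    simp only [scale, Finset.mem_image, exists_exists_and_eq_and]
    constructor
    · exact fun hx => ⟨x, hx, Nat.mul_div_cancel' (dvd_of_mul_right_dvd (hdB x hx))⟩
    · rintro ⟨y, hy, rfl⟩
      rwa [Nat.mul_div_cancel' (dvd_of_mul_right_dvd (hdB y hy))]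

/-! ### Counting tilings -/

/-- The tilings `A ⊕ B = {0, …, ab - 1}` with `|A| = a` and `|B| = b`. -/
def tilings (a b : ℕ) : Set (Finset ℕ × Finset ℕ) :=
  {P | P.1.card = a ∧ P.2.card = b ∧ Tile P.1 P.2 (a * b)}

lemma tilings_finite {a b : ℕ} (ha : 0 < a) (hb : 0 < b) : (tilings a b).Finite := by
  have hN := Nat.mul_pos ha hb
  refine (Finset.finite_toSet ((Finset.range (a * b)).powerset ×ˢ
    (Finset.range (a * b)).powerset)).subset ?_
  rintro ⟨A, B⟩ ⟨-, -, h⟩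
  simp only [Finset.coe_product, Set.mem_prod, Finset.mem_coe, Finset.mem_powerset]
  exact ⟨h.subset_left hN, h.swap.subset_left hN⟩

lemma tilings_swap (a b : ℕ) : tilings b a = Prod.swap '' tilings a b := by
  ext ⟨A, B⟩
  constructor
  · rintro ⟨h1, h2, h⟩
    exact ⟨(B, A), ⟨h2, h1, mul_comm b a ▸ h.swap⟩, rfl⟩
  · rintro ⟨⟨B', A'⟩, ⟨h1, h2, h⟩, e⟩
    cases e
    exact ⟨h2, h1, mul_comm a b ▸ h.swap⟩

lemma ncard_tilings_swap (a b : ℕ) : (tilings b a).ncard = (tilings a b).ncard := by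
  rw [tilings_swap, Set.ncard_image_of_injective _ Prod.swap_injective]

lemma ncard_tilings_one {a : ℕ} (ha : 0 < a) : (tilings a 1).ncard = 1 := by
  rw [Set.ncard_eq_one]
  refine ⟨(Finset.range a, {0}), ?_⟩
  ext ⟨A, B⟩
  rw [Set.mem_singleton_iff, Prod.mk.injEq]
  constructor
  · rintro ⟨h1, h2, h⟩
    dsimp only at h1 h2 h
    rw [mul_one] at h
    refine ⟨Finset.eq_of_subset_of_card_le (h.subset_left ha) (by simp [h1]), ?_⟩
    obtain ⟨b, rfl⟩ := Finset.card_eq_one.1 h2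
    have := h.zero_right ha
    rw [Finset.mem_singleton] at this
    rw [this]
  · rintro ⟨rfl, rfl⟩
    refine ⟨by simp, by simp, ⟨fun x => by simp, fun x hx y hy x' hx' y' hy' e => ?_⟩⟩
    simp only [Finset.mem_singleton] at hy hy'
    omega

/-- Tilings with `1 ∈ A` are the `p`-fold dilations of the tilings with `|A|` smaller by the
factor `p`. -/
lemma ncard_one_mem {p : ℕ} (hp : p.Prime) (m : ℕ) {b : ℕ} (hb : 0 < b) :
    {P ∈ tilings (p ^ (m + 1)) b | 1 ∈ P.1}.ncard = (tilings (p ^ m) b).ncard := by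
  have hp0 := hp.pos
  have hinj : Function.Injective (Prod.map (blow p) (scale p)) :=
    (blow_injective hp0).prodMap (scale_injective hp0)
  rw [← Set.ncard_image_of_injective (tilings (p ^ m) b) hinj]
  congr 1
  have eN : p ^ (m + 1) * b = p * (p ^ m * b) := by ring
  ext ⟨A, B⟩
  constructor
  · rintro ⟨⟨hA, hB, h⟩, h1⟩
    dsimp only at hA hB h h1
    obtain ⟨A', B', rfl, rfl⟩ := h.exists_dilate (Nat.mul_pos (pow_pos hp0 _) hb) hp hA h1
    rw [eN, tile_blow_scale hp0] at h
    rw [card_blow hp0, pow_succ'] at hA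
    rw [card_scale hp0] at hB
    exact ⟨(A', B'), ⟨Nat.eq_of_mul_eq_mul_left hp0 hA, hB, h⟩, rfl⟩
  · rintro ⟨⟨A', B'⟩, ⟨hA, hB, h⟩, e⟩
    cases e
    dsimp only at hA hB h
    refine ⟨⟨?_, ?_, ?_⟩, ?_⟩ <;> dsimp only
    · rw [card_blow hp0, hA, pow_succ']
    · rw [card_scale hp0, hB]
    · rwa [eN, tile_blow_scale hp0]
    · rw [mem_blow hp0, Nat.div_eq_of_lt hp.one_lt]
      exact h.zero_left (Nat.mul_pos (pow_pos hp0 m) hb)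

lemma ncard_tilings {p q : ℕ} (hp : p.Prime) (hq : q.Prime) (m k : ℕ) :
    (tilings (p ^ m) (q ^ k)).ncard = (m + k).choose m := by
  have pp : ∀ m, 0 < p ^ m := fun m => pow_pos hp.pos m
  have qp : ∀ m, 0 < q ^ m := fun m => pow_pos hq.pos m
  induction m generalizing k with
  | zero => rw [pow_zero, ncard_tilings_swap, ncard_tilings_one (qp k), Nat.choose_zero_right]
  | succ m ihm =>
  induction k with
  | zero => rw [pow_zero, ncard_tilings_one (pp _), add_zero, Nat.choose_self]
  | succ k ihk =>
  have hN := Nat.mul_pos (pp (m + 1)) (qp (k + 1))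
  have hN1 : 1 < p ^ (m + 1) * q ^ (k + 1) :=
    Nat.one_lt_mul_iff.2 ⟨pp _, qp _, Or.inl (Nat.one_lt_pow (by omega) hp.one_lt)⟩
  have hfin := tilings_finite (pp (m + 1)) (qp (k + 1))
  -- Swapping the two sets turns the condition `1 ∈ B` into `1 ∈ A`.
  have hB : {P ∈ tilings (p ^ (m + 1)) (q ^ (k + 1)) | 1 ∈ P.2} =
      Prod.swap '' {P ∈ tilings (q ^ (k + 1)) (p ^ (m + 1)) | 1 ∈ P.1} := by
    rw [tilings_swap (q ^ (k + 1)) (p ^ (m + 1))]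
    ext ⟨A, B⟩
    constructor
    · rintro ⟨⟨⟨B', A'⟩, hT, e⟩, h1⟩
      cases e
      exact ⟨_, ⟨hT, h1⟩, rfl⟩
    · rintro ⟨⟨B', A'⟩, ⟨hT, h1⟩, e⟩
      cases e
      exact ⟨⟨_, hT, rfl⟩, h1⟩
  have hunion : tilings (p ^ (m + 1)) (q ^ (k + 1)) =
      {P ∈ tilings (p ^ (m + 1)) (q ^ (k + 1)) | 1 ∈ P.1} ∪
      {P ∈ tilings (p ^ (m + 1)) (q ^ (k + 1)) | 1 ∈ P.2} := by
    ext ⟨A, B⟩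
    simp only [Set.mem_union, Set.mem_ofPred_eq, ← and_or_left]
    refine ⟨fun hT => ⟨hT, ?_⟩, fun hT => hT.1⟩
    obtain ⟨a, ha, b, hb, e⟩ := (hT.2.2.cover 1).1 hN1
    rcases Nat.eq_zero_or_pos b with h0 | h0
    · have : a = 1 := by omega
      exact Or.inl (this ▸ ha)
    · have : b = 1 := by omega
      exact Or.inr (this ▸ hb)
  have hdisj : Disjoint {P ∈ tilings (p ^ (m + 1)) (q ^ (k + 1)) | 1 ∈ P.1}
      {P ∈ tilings (p ^ (m + 1)) (q ^ (k + 1)) | 1 ∈ P.2} := by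
    rw [Set.disjoint_left]
    rintro ⟨A, B⟩ ⟨hT, h1⟩ ⟨-, h2⟩
    exact hT.2.2.not_mem_right hN one_pos h1 h2
  rw [hunion, Set.ncard_union_eq hdisj (hfin.subset (Set.sep_subset _ _))
    (hfin.subset (Set.sep_subset _ _)), ncard_one_mem hp m (qp _), hB,
    Set.ncard_image_of_injective _ Prod.swap_injective, ncard_one_mem hq k (pp _),
    ncard_tilings_swap (p ^ (m + 1)), ihm, ihk, show m + 1 + (k + 1) = (m + (k + 1)) + 1 by ring,
    Nat.choose_succ_succ, show m + 1 + k = m + (k + 1) by ring]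

/-! ### Difference sets and tilings -/

/-- The pair `(M - A, B + M + 1)` with `M = max A`, whose differences are the numbers
`a + b + 1`. -/
def toDiff (P : Finset ℕ × Finset ℕ) : Finset ℕ × Finset ℕ :=
  (P.1.image (P.1.sup id - ·), P.2.image (· + P.1.sup id + 1))

lemma sup_reflect {A : Finset ℕ} (h0 : 0 ∈ A) : (A.image (A.sup id - ·)).sup id = A.sup id := by
  apply le_antisymm
  · refine Finset.sup_le fun x hx => ?_
    obtain ⟨y, -, rfl⟩ := Finset.mem_image.1 hx
    exact Nat.sub_le _ _
  · exact Finset.le_sup (f := id) (Finset.mem_image.2 ⟨0, h0, Nat.sub_zero _⟩)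

lemma le_sup_id {A : Finset ℕ} {a : ℕ} (ha : a ∈ A) : a ≤ A.sup id := Finset.le_sup (f := id) ha

lemma reflect_reflect {A : Finset ℕ} {M : ℕ} (hM : ∀ a ∈ A, a ≤ M) :
    (A.image (M - ·)).image (M - ·) = A := by
  rw [Finset.image_image]
  conv_rhs => rw [← Finset.image_id (s := A)]
  refine Finset.image_congr fun a ha => ?_
  have := hM a ha
  simp only [Function.comp, id]
  omega

lemma card_reflect {A : Finset ℕ} {M : ℕ} (hM : ∀ a ∈ A, a ≤ M) :
    (A.image (M - ·)).card = A.card := by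
  refine Finset.card_image_of_injOn fun a ha b hb e => ?_
  have := hM a ha
  have := hM b hb
  omega

lemma gracefulCount_eq {a b : ℕ} (ha : 0 < a) (hb : 0 < b) :
    gracefulCount a b = (tilings a b).ncard := by
  have hN := Nat.mul_pos ha hb
  have hinj : Set.InjOn toDiff (tilings a b) := by
    rintro ⟨A, B⟩ ⟨-, -, h⟩ ⟨A', B'⟩ ⟨-, -, h'⟩ e
    simp only [toDiff, Prod.mk.injEq] at e
    obtain ⟨e1, e2⟩ := e
    have hs : A.sup id = A'.sup id := by
      rw [← sup_reflect (h.zero_left hN), ← sup_reflect (h'.zero_left hN)]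
      exact congrArg (fun s => s.sup id) e1
    have hA : A = A' := by
      rw [← reflect_reflect fun a => le_sup_id (A := A) (a := a),
        ← reflect_reflect fun a => le_sup_id (A := A') (a := a)]
      rw [e1, hs]
    rw [← hs] at e2
    have hB : B = B' := Finset.image_injective (fun x y hxy => by simpa using hxy) e2
    rw [hA, hB]
  rw [← hinj.ncard_image, gracefulCount]
  congr 1
  ext ⟨S, T⟩
  constructor
  · rintro ⟨hS, hT, hSr, hTr, himg⟩
    dsimp only at hS hT hSr hTr himg
    have hSne : S.Nonempty := Finset.card_pos.1 (by omega)
    set M := S.sup id with hM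
    have hMS : M ∈ S := by
      obtain ⟨x, hx, e⟩ := Finset.exists_mem_eq_sup S hSne id
      rw [hM, e]; exact hx
    have hleM : ∀ x ∈ S, x ≤ M := fun x hx => le_sup_id hx
    have hmem : ∀ z : ℤ, (1 ≤ z ∧ z ≤ (a : ℤ) * b) ↔ ∃ x ∈ S, ∃ y ∈ T, (y : ℤ) - x = z := by
      intro z
      rw [← Finset.mem_Icc, ← himg]
      simp only [Finset.mem_image, Finset.mem_product, Prod.exists]
      constructor
      · rintro ⟨x, y, ⟨hx, hy⟩, e⟩
        exact ⟨x, hx, y, hy, e⟩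
      · rintro ⟨x, hx, y, hy, e⟩
        exact ⟨x, y, ⟨hx, hy⟩, e⟩
    -- There are as many differences as pairs, so no difference occurs twice.
    have hdinj : Set.InjOn (fun q : ℕ × ℕ => (q.2 : ℤ) - (q.1 : ℤ)) (S ×ˢ T : Finset (ℕ × ℕ)) := by
      rw [← Finset.card_image_iff, himg, Finset.card_product, hS, hT, Int.card_Icc]
      have : ((a : ℤ) * b + 1 - 1) = ((a * b : ℕ) : ℤ) := by push_cast; ring
      rw [this, Int.toNat_natCast]
    have hltT : ∀ y ∈ T, M + 1 ≤ y := by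
      intro y hy
      have := (hmem ((y : ℤ) - M)).2 ⟨M, hMS, y, hy, rfl⟩
      omega
    -- The difference `ab` forces `0 ∈ S`.
    have h0S : 0 ∈ S := by
      have h1 : (1 : ℤ) ≤ (a : ℤ) * b := by exact_mod_cast hN
      obtain ⟨x, hx, y, hy, e⟩ := (hmem ((a : ℤ) * b)).1 ⟨h1, le_rfl⟩
      have hy' := Finset.mem_range.1 (hTr hy)
      have hy2 : (y : ℤ) ≤ (a : ℤ) * b := by exact_mod_cast Nat.lt_succ_iff.1 hy'
      have : x = 0 := by omega
      exact this ▸ hx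
    have hsup : (S.image (M - ·)).sup id = M := sup_reflect h0S
    refine ⟨(S.image (M - ·), T.image (· - (M + 1))), ⟨?_, ?_, ?_, ?_⟩, ?_⟩
    · rw [← hS]; exact card_reflect hleM
    · rw [← hT]
      refine Finset.card_image_of_injOn fun x hx y hy e => ?_
      have := hltT x hx
      have := hltT y hy
      omega
    · intro x
      dsimp only
      have := hmem ((x : ℤ) + 1)
      have hx : x < a * b ↔ (1 ≤ (x : ℤ) + 1 ∧ (x : ℤ) + 1 ≤ (a : ℤ) * b) := by
        rw [← Nat.cast_mul]
        omega
      rw [hx, this]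
      simp only [Finset.mem_image, exists_exists_and_eq_and]
      refine exists_congr fun s => and_congr_right fun hs => exists_congr fun t =>
        and_congr_right fun ht => ?_
      have := hleM s hs
      have := hltT t ht
      omega
    · simp only [Finset.mem_image]
      rintro _ ⟨s, hs, rfl⟩ _ ⟨t, ht, rfl⟩ _ ⟨s', hs', rfl⟩ _ ⟨t', ht', rfl⟩ e
      have h1 := hleM s hs
      have h2 := hltT t ht
      have h3 := hleM s' hs'
      have h4 := hltT t' ht'
      have := hdinj (x₁ := (s, t)) (by simp [hs, ht]) (x₂ := (s', t')) (by simp [hs', ht'])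
        (by dsimp only; omega)
      rw [Prod.mk.injEq] at this
      rw [this.1, this.2]
      exact ⟨rfl, rfl⟩
    · simp only [toDiff, hsup, Prod.mk.injEq]
      refine ⟨reflect_reflect hleM, ?_⟩
      rw [Finset.image_image]
      conv_rhs => rw [← Finset.image_id (s := T)]
      refine Finset.image_congr fun t ht => ?_
      have := hltT t ht
      simp only [Function.comp, id]
      omega
  · rintro ⟨⟨A, B⟩, ⟨hA, hB, h⟩, e⟩
    cases e
    dsimp only at hA hB h
    have hAne : A.Nonempty := ⟨0, h.zero_left hN⟩
    set M := A.sup id with hM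
    have hMA : M ∈ A := by
      obtain ⟨x, hx, e⟩ := Finset.exists_mem_eq_sup A hAne id
      rw [hM, e]; exact hx
    have hleM : ∀ x ∈ A, x ≤ M := fun x hx => le_sup_id hx
    refine ⟨?_, ?_, ?_, ?_, ?_⟩ <;> dsimp only
    · rw [← hA]; exact card_reflect hleM
    · rw [← hB]
      exact Finset.card_image_of_injective _ fun x y hxy => by simpa using hxy
    · intro x hx
      obtain ⟨y, hy, rfl⟩ := Finset.mem_image.1 hx
      have := h.lt hMA (h.zero_right hN)
      rw [Finset.mem_range]
      omega
    · intro x hx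
      obtain ⟨y, hy, rfl⟩ := Finset.mem_image.1 hx
      have := h.lt hMA hy
      rw [Finset.mem_range]
      omega
    · ext z
      rw [Finset.mem_Icc, ← Nat.cast_mul]
      simp only [Finset.mem_image, Finset.mem_product, Prod.exists]
      constructor
      · rintro ⟨_, _, ⟨⟨x, hx, rfl⟩, ⟨y, hy, rfl⟩⟩, rfl⟩
        have := h.lt hx hy
        have := hleM x hx
        omega
      · rintro ⟨hz1, hz2⟩
        obtain ⟨x, hx, y, hy, e⟩ := (h.cover (z - 1).toNat).1 (by omega)
        have := hleM x hx
        exact ⟨_, _, ⟨⟨x, hx, rfl⟩, ⟨y, hy, rfl⟩⟩, by omega⟩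

/-- For a positive integer `n` and primes `p`, `q`,
`𝒜(pⁿ, qⁿ) = C(2n, n)`. -/
theorem stmt_11 (n p q : ℕ) (hn : 0 < n) (hp : p.Prime) (hq : q.Prime) :
    gracefulCount (p ^ n) (q ^ n) = (2 * n).choose n := by
  rw [gracefulCount_eq (pow_pos hp.pos n) (pow_pos hq.pos n), ncard_tilings hp hq, two_mul]
end

section
/- Let a and b be positive integers and let c be a positive integer. Suppose (S', S'') is a pair of finite sets of nonnegative integers with |S'| = a, |S''| = b, S', S'' ⊆ {0, 1, ..., ab}, and {y − x : x ∈ S', y ∈ S''} = {1, 2, ..., ab}. Define T' = {c·x + z : x ∈ S', 0 ≤ z < c} and T'' = {c·y : y ∈ S''}. Then |T'| = ac, |T''| = b, T', T'' ⊆ {0, 1, ..., abc}, and {y − x : x ∈ T', y ∈ T''} = {1, 2, ..., abc}. (Multiplication by c on the left transforms an α-graceful labeling of K_{a,b} into one of K_{ac,b}.) -/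
/-!
A difference of the new pair is `c * y - (c * x + z) = c * (y - x) - z` with `0 ≤ z < c`. As
`d = y - x` runs through `1, …, ab`, the blocks `{c * d - z : 0 ≤ z < c}`, that is
`{c * (d - 1) + 1, …, c * d}`, tile `{1, …, abc}`. The cardinalities come from uniqueness of
division by `c`, and `T' ⊆ {0, …, abc}` from every `x ∈ S'` being smaller than some `y ≤ ab`.
-/

/-- multiplication by `c` on the left. Let `a, b, c` be positive integers
and let `(S', S'')` be a pair of finite sets of nonnegative integers with `|S'| = a`,
`|S''| = b`, `S', S'' ⊆ {0, …, ab}`, and `{y − x : x ∈ S', y ∈ S''} = {1, …, ab}`. Then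
`T' = {cx + z : x ∈ S', 0 ≤ z < c}` and `T'' = {cy : y ∈ S''}` satisfy `|T'| = ac`,
`|T''| = b`, `T', T'' ⊆ {0, …, abc}`, and `{y − x : x ∈ T', y ∈ T''} = {1, …, abc}`. -/
theorem stmt_18 (a b c : ℕ) (ha : 0 < a) (hb : 0 < b) (hc : 0 < c)
    (S₁ S₂ : Finset ℕ) (h₁ : S₁.card = a) (h₂ : S₂.card = b)
    (hs₁ : S₁ ⊆ Finset.range (a * b + 1)) (hs₂ : S₂ ⊆ Finset.range (a * b + 1))
    (hdiff : Finset.image (fun q : ℕ × ℕ => (q.2 : ℤ) - (q.1 : ℤ)) (S₁ ×ˢ S₂) =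
      Finset.Icc (1 : ℤ) ((a : ℤ) * b)) :
    ((S₁ ×ˢ Finset.range c).image (fun q : ℕ × ℕ => c * q.1 + q.2)).card = a * c ∧
    (S₂.image (fun y => c * y)).card = b ∧
    (S₁ ×ˢ Finset.range c).image (fun q : ℕ × ℕ => c * q.1 + q.2) ⊆
      Finset.range (a * b * c + 1) ∧
    S₂.image (fun y => c * y) ⊆ Finset.range (a * b * c + 1) ∧
    Finset.image (fun q : ℕ × ℕ => (q.2 : ℤ) - (q.1 : ℤ))
        (((S₁ ×ˢ Finset.range c).image (fun q : ℕ × ℕ => c * q.1 + q.2)) ×ˢ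
          (S₂.image (fun y => c * y))) =
      Finset.Icc (1 : ℤ) ((a : ℤ) * b * c) := by
  have hlow : ∀ x ∈ S₁, ∀ y ∈ S₂, 1 ≤ (y : ℤ) - x ∧ (y : ℤ) - x ≤ (a : ℤ) * b := by
    intro x hx y hy
    rw [← Finset.mem_Icc, ← hdiff]
    exact Finset.mem_image.2 ⟨(x, y), Finset.mem_product.2 ⟨hx, hy⟩, rfl⟩
  have hsurj : ∀ d : ℤ, 1 ≤ d → d ≤ (a : ℤ) * b →
      ∃ x ∈ S₁, ∃ y ∈ S₂, (y : ℤ) - x = d := by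
    intro d hd hd'
    have hmem := Finset.mem_Icc.2 ⟨hd, hd'⟩
    rw [← hdiff] at hmem
    obtain ⟨⟨x, y⟩, hxy, h⟩ := Finset.mem_image.1 hmem
    rw [Finset.mem_product] at hxy
    exact ⟨x, hxy.1, y, hxy.2, h⟩
  have hcZ : (0 : ℤ) < c := by exact_mod_cast hc
  refine ⟨?_, ?_, ?_, ?_, ?_⟩
  · rw [Finset.card_image_of_injOn, Finset.card_product, Finset.card_range, h₁]
    rintro ⟨x, z⟩ hx ⟨x', z'⟩ hx' h
    simp only [Finset.coe_product, Set.mem_prod, Finset.mem_coe, Finset.mem_range] at hx hx' h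
    have hquot : x = x' := by
      have h' := congrArg (· / c) h
      simpa [Nat.mul_add_div hc, Nat.div_eq_of_lt hx.2, Nat.div_eq_of_lt hx'.2] using h'
    subst hquot
    simpa using h
  · rw [Finset.card_image_of_injective _ (fun _ _ h => Nat.eq_of_mul_eq_mul_left hc h), h₂]
  · intro t ht
    obtain ⟨⟨x, z⟩, hxz, rfl⟩ := Finset.mem_image.1 ht
    simp only [Finset.mem_product, Finset.mem_range] at hxz ⊢
    obtain ⟨y, hy⟩ : S₂.Nonempty := Finset.card_pos.1 (h₂ ▸ hb)
    have hyle := Finset.mem_range.1 (hs₂ hy)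
    have hxy := (hlow x hxz.1 y hy).1
    have hx : x + 1 ≤ a * b := by omega
    nlinarith [Nat.mul_le_mul_left c hx]
  · intro t ht
    obtain ⟨y, hy, rfl⟩ := Finset.mem_image.1 ht
    have hyle : y ≤ a * b := Nat.lt_succ_iff.1 (Finset.mem_range.1 (hs₂ hy))
    rw [Finset.mem_range]
    nlinarith [Nat.mul_le_mul_left c hyle]
  · ext n
    rw [Finset.mem_Icc]
    constructor
    · intro hn
      obtain ⟨⟨t, u⟩, htu, rfl⟩ := Finset.mem_image.1 hn
      obtain ⟨ht, hu⟩ := Finset.mem_product.1 htu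
      obtain ⟨⟨x, z⟩, hxz, rfl⟩ := Finset.mem_image.1 ht
      obtain ⟨y, hy, rfl⟩ := Finset.mem_image.1 hu
      simp only [Finset.mem_product, Finset.mem_range] at hxz
      obtain ⟨hd, hd'⟩ := hlow x hxz.1 y hy
      have hz : (z : ℤ) < c := by exact_mod_cast hxz.2
      have hz0 : (0 : ℤ) ≤ z := Int.natCast_nonneg z
      push_cast
      constructor
      · nlinarith [mul_le_mul_of_nonneg_left hd hcZ.le]
      · nlinarith [mul_le_mul_of_nonneg_left hd' hcZ.le]
    · rintro ⟨hn, hn'⟩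
      -- `n` lies in the block of `d = ⌈n / c⌉ = (n - 1) / c + 1`, at offset `z = c * d - n`.
      have hdm := Int.mul_ediv_add_emod (n - 1) c
      have hr := Int.emod_nonneg (n - 1) hcZ.ne'
      have hr' := Int.emod_lt_of_pos (n - 1) hcZ
      have hq : 0 ≤ (n - 1) / c := Int.ediv_nonneg (by omega) hcZ.le
      have hq' : (n - 1) / c < (a : ℤ) * b := Int.ediv_lt_of_lt_mul hcZ (by omega)
      obtain ⟨x, hx, y, hy, hxy⟩ := hsurj ((n - 1) / c + 1) (by omega) (by omega)
      obtain ⟨z, hz⟩ : ∃ z : ℕ, (z : ℤ) = c - 1 - (n - 1) % c :=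
        ⟨_, Int.toNat_of_nonneg (by omega)⟩
      refine Finset.mem_image.2 ⟨(c * x + z, c * y), Finset.mem_product.2
        ⟨Finset.mem_image.2 ⟨(x, z), Finset.mem_product.2
          ⟨hx, Finset.mem_range.2 (by omega)⟩, rfl⟩, Finset.mem_image_of_mem _ hy⟩, ?_⟩
      push_cast
      linear_combination (c : ℤ) * hxy - hz + hdm
end

section
/- Let a and b be positive integers and let c be a positive integer. Suppose (S', S'') is a pair of finite sets of nonnegative integers with |S'| = a, |S''| = b, S', S'' ⊆ {0, 1, ..., ab}, and {y − x : x ∈ S', y ∈ S''} = {1, 2, ..., ab}. Define U' = {c·x : x ∈ S'} and U'' = {c·y − z : y ∈ S'', 0 ≤ z < c}. Then |U'| = a, |U''| = bc, U', U'' ⊆ {0, 1, ..., abc}, and {y − x : x ∈ U', y ∈ U''} = {1, 2, ..., abc}. (Multiplication by c on the right transforms an α-graceful labeling of K_{a,b} into one of K_{a,bc}.) -/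
/-!
Every `y ∈ S₂` is positive: `S₁` is nonempty and `y - x ≥ 1` for `x ∈ S₁`. Hence the natural-number
subtraction `c * y - z` with `z < c` never truncates. The statement then reduces to division with
remainder by `c`: each integer is `c * m - z` for exactly one pair `(m, z)` with `0 ≤ z < c`, and it
lies in `[1, abc]` exactly when `m` lies in `[1, ab]`. Uniqueness (`eq_of_mul_sub_eq`) gives the
cardinality of `U''`; existence, applied to a difference `m = y - x`, gives the difference set,
because `(c * y - z) - c * x = c * (y - x) - z`.
-/

/-- The quotient in division by `c` with remainder subtracted is unique. -/
lemma eq_of_mul_sub_eq {c y y' z z' : ℤ} (hz : 0 ≤ z) (hzc : z < c) (hz' : 0 ≤ z') (hzc' : z' < c)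
    (h : c * y - z = c * y' - z') : y = y' := by
  rcases lt_trichotomy y y' with hlt | heq | hlt
  · nlinarith
  · exact heq
  · nlinarith

/-- multiplication by `c` on the right. Let `a, b, c` be positive integers
and let `(S', S'')` be a pair of finite sets of nonnegative integers with `|S'| = a`,
`|S''| = b`, `S', S'' ⊆ {0, …, ab}`, and `{y − x : x ∈ S', y ∈ S''} = {1, …, ab}`. Then
`U' = {cx : x ∈ S'}` and `U'' = {cy − z : y ∈ S'', 0 ≤ z < c}` satisfy `|U'| = a`,
`|U''| = bc`, `U', U'' ⊆ {0, …, abc}`, and `{y − x : x ∈ U', y ∈ U''} = {1, …, abc}`. -/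
theorem stmt_19 (a b c : ℕ) (ha : 0 < a) (hb : 0 < b) (hc : 0 < c)
    (S₁ S₂ : Finset ℕ) (h₁ : S₁.card = a) (h₂ : S₂.card = b)
    (hs₁ : S₁ ⊆ Finset.range (a * b + 1)) (hs₂ : S₂ ⊆ Finset.range (a * b + 1))
    (hdiff : Finset.image (fun q : ℕ × ℕ => (q.2 : ℤ) - (q.1 : ℤ)) (S₁ ×ˢ S₂) =
      Finset.Icc (1 : ℤ) ((a : ℤ) * b)) :
    (S₁.image (fun x => c * x)).card = a ∧
    ((S₂ ×ˢ Finset.range c).image (fun q : ℕ × ℕ => c * q.1 - q.2)).card = b * c ∧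
    S₁.image (fun x => c * x) ⊆ Finset.range (a * b * c + 1) ∧
    (S₂ ×ˢ Finset.range c).image (fun q : ℕ × ℕ => c * q.1 - q.2) ⊆
      Finset.range (a * b * c + 1) ∧
    Finset.image (fun q : ℕ × ℕ => (q.2 : ℤ) - (q.1 : ℤ))
        ((S₁.image (fun x => c * x)) ×ˢ
          ((S₂ ×ˢ Finset.range c).image (fun q : ℕ × ℕ => c * q.1 - q.2))) =
      Finset.Icc (1 : ℤ) ((a : ℤ) * b * c) := by
  have hS₁ : S₁.Nonempty := Finset.card_pos.mp (h₁ ▸ ha)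
  have hrange : ∀ x ∈ S₁, ∀ y ∈ S₂, (1 : ℤ) ≤ y - x ∧ (y : ℤ) - x ≤ a * b := by
    intro x hx y hy
    have hmem := Finset.mem_image_of_mem (fun q : ℕ × ℕ => (q.2 : ℤ) - (q.1 : ℤ))
      (Finset.mk_mem_product hx hy)
    rw [hdiff] at hmem
    exact Finset.mem_Icc.mp hmem
  have hpos : ∀ y ∈ S₂, 1 ≤ y := by
    intro y hy
    obtain ⟨x, hx⟩ := hS₁
    have := (hrange x hx y hy).1
    omega
  -- the subtraction defining `U''` is the integer one
  have hcast : ∀ y ∈ S₂, ∀ z < c, ((c * y - z : ℕ) : ℤ) = c * y - z := by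
    intro y hy z hz
    have : z ≤ c * y := hz.le.trans (Nat.le_mul_of_pos_right c (hpos y hy))
    push_cast [Nat.cast_sub this]
    rfl
  refine ⟨?_, ?_, ?_, ?_, ?_⟩
  · rw [Finset.card_image_of_injective _ (mul_right_injective₀ hc.ne'), h₁]
  · rw [Finset.card_image_of_injOn, Finset.card_product, h₂, Finset.card_range]
    rintro ⟨y, z⟩ hq ⟨y', z'⟩ hq' heq
    simp only [Finset.coe_product, Set.mem_prod, Finset.mem_coe, Finset.mem_range] at hq hq'
    have heq' : (c * y - z : ℤ) = c * y' - z' := by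
      rw [← hcast y hq.1 z hq.2, ← hcast y' hq'.1 z' hq'.2]
      exact congrArg _ heq
    have hy : (y : ℤ) = y' := eq_of_mul_sub_eq (by positivity) (by exact_mod_cast hq.2)
      (by positivity) (by exact_mod_cast hq'.2) heq'
    rw [hy] at heq'
    ext
    · exact_mod_cast hy
    · simp only
      omega
  · intro u hu
    obtain ⟨x, hx, rfl⟩ := Finset.mem_image.mp hu
    have := Finset.mem_range.mp (hs₁ hx)
    simp only [Finset.mem_range]
    nlinarith
  · intro u hu
    obtain ⟨⟨y, z⟩, hq, rfl⟩ := Finset.mem_image.mp hu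
    have := Finset.mem_range.mp (hs₂ (Finset.mem_product.mp hq).1)
    have hcy : c * y ≤ a * b * c := by nlinarith
    simp only [Finset.mem_range]
    omega
  · ext n
    constructor
    · intro hn
      obtain ⟨⟨u, v⟩, huv, rfl⟩ := Finset.mem_image.mp hn
      obtain ⟨hu, hv⟩ := Finset.mem_product.mp huv
      obtain ⟨x, hx, rfl⟩ := Finset.mem_image.mp hu
      obtain ⟨⟨y, z⟩, hq, rfl⟩ := Finset.mem_image.mp hv
      obtain ⟨hy, hz⟩ := Finset.mem_product.mp hq
      have hz := Finset.mem_range.mp hz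
      obtain ⟨hlo, hhi⟩ := hrange x hx y hy
      simp only [Finset.mem_Icc] at *
      rw [hcast y hy z hz]
      push_cast
      have hzc : (z : ℤ) < c := by exact_mod_cast hz
      constructor <;> nlinarith
    · intro hn
      obtain ⟨hlo, hhi⟩ := Finset.mem_Icc.mp hn
      have hc' : (0 : ℤ) < c := by exact_mod_cast hc
      -- `n = c * m - z` with `m = (n - 1) / c + 1`, the ceiling of `n / c`
      have hdm := Int.emod_add_mul_ediv (n - 1) c
      have hr0 := Int.emod_nonneg (n - 1) hc'.ne'
      have hrc := Int.emod_lt_of_pos (n - 1) hc'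
      have hq0 : 0 ≤ (n - 1) / (c : ℤ) := Int.ediv_nonneg (by omega) hc'.le
      have hqlt : (n - 1) / (c : ℤ) < a * b := Int.ediv_lt_of_lt_mul hc' (by omega)
      have hm : (n - 1) / (c : ℤ) + 1 ∈ Finset.Icc (1 : ℤ) ((a : ℤ) * b) :=
        Finset.mem_Icc.mpr ⟨by omega, by omega⟩
      rw [← hdiff] at hm
      obtain ⟨⟨x, y⟩, hxy, hm⟩ := Finset.mem_image.mp hm
      obtain ⟨hx, hy⟩ := Finset.mem_product.mp hxy
      obtain ⟨z, hz⟩ := Int.eq_ofNat_of_zero_le (show 0 ≤ (c : ℤ) - 1 - (n - 1) % c by omega)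
      have hzc : z < c := by omega
      refine Finset.mem_image.mpr ⟨(c * x, c * y - z), Finset.mk_mem_product
        (Finset.mem_image_of_mem _ hx)
        (Finset.mem_image.mpr ⟨(y, z), Finset.mk_mem_product hy (Finset.mem_range.mpr hzc), rfl⟩),
        ?_⟩
      simp only at hm hx hy ⊢
      rw [hcast y hy z hzc]
      push_cast
      linear_combination (c : ℤ) * hm + hz + hdm
end
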